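/- arXiv:2203.17029 — 3 statements merged into one kernel-verified Lean document; each statement's English description precedes it below -/
import Mathlib

section
/- Let q ∈ ℂ with 0 < |q| < 1 and let t ∈ ℂ∖{0} with t ∉ q^ℤ. Then, as the natural number r tends to infinity, g^{(0,0)}(q^r t, q)/θ(q^r t; q) tends to −1/(q;q)_∞² and g^{(0,1)}(q^r t, q)/θ(q^r t; q) tends to 0. -/
open Finset Filter

/-- Finite q-Pochhammer symbol `(x;q)_k = ∏_{j=0}^{k-1} (1 - x q^j)`. -/
noncomputable def qPoch (x q : ℂ) (k : ℕ) : ℂ := ∏ j ∈ Finset.range k, (1 - x * q ^ j)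

/-- Infinite q-Pochhammer symbol `(x;q)_∞ = ∏_{j=0}^{∞} (1 - x q^j)`. -/
noncomputable def qPochInf (x q : ℂ) : ℂ := ∏' j : ℕ, (1 - x * q ^ j)

/-- The Jacobi theta function `θ(t;q) = Σ_{k∈ℤ} (−1)^k q^{k(k+1)/2} t^k`. -/
noncomputable def jtheta (t q : ℂ) : ℂ :=
  ∑' k : ℤ, (-1 : ℂ) ^ k * q ^ (k * (k + 1) / 2) * t ^ k

/-- The derivative `θ'(t;q) = Σ_{k∈ℤ} (−1)^k k q^{k(k+1)/2} t^k` (with respect to t d/dt). -/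
noncomputable def jthetaD (t q : ℂ) : ℂ :=
  ∑' k : ℤ, (-1 : ℂ) ^ k * (k : ℂ) * q ^ (k * (k + 1) / 2) * t ^ k

/-- The Eisenstein-type series `E₁(q) = 1 − 4 Σ_{j=1}^∞ q^j/(1−q^j)`. -/
noncomputable def E1 (q : ℂ) : ℂ := 1 - 4 * ∑' j : ℕ, q ^ (j + 1) / (1 - q ^ (j + 1))

/-- The Appell-Lerch sum
`AL(t,λ,q) = θ(λ;q)⁻¹ Σ_{ℓ∈ℤ} (−1)^ℓ q^{ℓ(ℓ+1)/2} λ^ℓ / (1 − λ t q^ℓ)`. -/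
noncomputable def AL (t lam q : ℂ) : ℂ :=
  (jtheta lam q)⁻¹ *
    ∑' k : ℤ, (-1 : ℂ) ^ k * q ^ (k * (k + 1) / 2) * lam ^ k / (1 - lam * t * q ^ k)

/-- The solution `g^{(0,0)}(t,q) = Σ_{k≥0} (−1)^k q^{k(k+1)/2} (q;q)_k^{−2} t^{−1−k}`. -/
noncomputable def g00 (t q : ℂ) : ℂ :=
  ∑' k : ℕ, (-1 : ℂ) ^ k * q ^ (k * (k + 1) / 2) / (qPoch q q k) ^ 2 * t ^ (-1 - (k : ℤ))

/-- The solution `g^{(0,1)}(t,q)`. -/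
noncomputable def g01 (t q : ℂ) : ℂ :=
  ∑' k : ℕ,
    (E1 q / 2 - 1 / 2 - jthetaD t⁻¹ q / jtheta t⁻¹ q +
        ∑ j ∈ Finset.range k, (1 + q ^ (j + 1)) / (1 - q ^ (j + 1))) *
      ((-1 : ℂ) ^ k * q ^ (k * (k + 1) / 2) / (qPoch q q k) ^ 2 * t ^ (-1 - (k : ℤ)))

/-!
Put `s = 1/t`. Since `θ(1/x) = -x θ(x)` and `θ` is quasi-periodic under `x ↦ q x`, dividing by
`θ(q^r t)` turns the `k`-th summand of `g^{(0,0)}(q^r t)` into `-(q;q)_k⁻²` times the `(k - r)`-th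
term of the normalised series `θ(s)/θ(s) = 1`. As `r → ∞` the window of summation `k - r ≥ -r`
exhausts `ℤ` while `(q;q)_k` becomes `(q;q)_∞`, whence the limit `-(q;q)_∞⁻²` by dominated
convergence. For `g^{(0,1)}` the extra coefficient is `(k - r) - θ'(s)/θ(s) + o(1)`, so in the limit
the two contributions `θ'(s)` and `-(θ'(s)/θ(s)) θ(s)` cancel.

That `θ(t) ≠ 0` off `q^ℤ` follows from Jacobi's triple product, obtained from the `q`-binomial
theorem by the same dominated convergence.
-/

open Topology

section DominatedConvergence

lemma tendsto_toNat_add_natCast_atTop (m : ℤ) :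
    Tendsto (fun n : ℕ => (m + n).toNat) atTop atTop :=
  tendsto_atTop.2 fun b => by
    filter_upwards [eventually_ge_atTop (b + m.natAbs)] with n hn
    omega

variable {R : Type*} [NormedRing R]

lemma summable_shifted_mul_of_norm_le [CompleteSpace R] {w : ℤ → R}
    (hw : Summable fun m => ‖w m‖) {c : ℕ → R} {C : ℝ} (hc : ∀ k, ‖c k‖ ≤ C) (n : ℤ) :
    Summable fun k : ℕ => w (k - n) * c k := by
  have hinj : Function.Injective fun k : ℕ => (k : ℤ) - n := fun a b h => by simpa using h
  refine .of_norm_bounded ((hw.comp_injective hinj).mul_right C) fun k => ?_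
  exact (norm_mul_le _ _).trans (mul_le_mul_of_nonneg_left (hc k) (norm_nonneg _))

lemma tendsto_tsum_shifted_mul [CompleteSpace R] {w : ℤ → R} (hw : Summable fun m => ‖w m‖)
    {c : ℕ → ℕ → R} {C : ℝ} (hc : ∀ n k, ‖c n k‖ ≤ C) {l : ℤ → R}
    (hl : ∀ m : ℤ, Tendsto (fun n : ℕ => c n (m + n).toNat) atTop (𝓝 (l m))) :
    Tendsto (fun n : ℕ => ∑' k : ℕ, w (k - n) * c n k) atTop (𝓝 (∑' m, w m * l m)) := by
  have hinj (n : ℕ) : Function.Injective fun k : ℕ => (k : ℤ) - n := fun a b h => by simpa using h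
  let F (n : ℕ) : ℤ → R :=
    Function.extend (fun k : ℕ => (k : ℤ) - n) (fun k => w (k - n) * c n k) 0
  have hF (n k : ℕ) : F n (k - n) = w (k - n) * c n k := (hinj n).extend_apply _ _ k
  have hlim (m : ℤ) : Tendsto (F · m) atTop (𝓝 (w m * l m)) := by
    refine ((hl m).const_mul (w m)).congr' ?_
    filter_upwards [eventually_ge_atTop m.natAbs] with n hn
    have hm : ((m + n).toNat : ℤ) - n = m := by omega
    have hFm := hF n (m + n).toNat
    rw [hm] at hFm
    exact hFm.symm
  have hbound (n : ℕ) (m : ℤ) : ‖F n m‖ ≤ ‖w m‖ * C := by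
    by_cases hm : ∃ k : ℕ, (k : ℤ) - n = m
    · obtain ⟨k, rfl⟩ := hm
      rw [hF]
      exact (norm_mul_le _ _).trans (mul_le_mul_of_nonneg_left (hc n k) (norm_nonneg _))
    · rw [show F n m = 0 from Function.extend_apply' _ _ m hm, norm_zero]
      exact mul_nonneg (norm_nonneg _) ((norm_nonneg _).trans (hc 0 0))
  simpa only [F, tsum_extend_zero (hinj _)] using
    tendsto_tsum_of_dominated_convergence (hw.mul_right C) hlim (.of_forall hbound)

lemma tendsto_tsum_shifted_mul_of_tendsto [CompleteSpace R] {w : ℤ → R}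
    (hw : Summable fun m => ‖w m‖) {c : ℕ → R} {l : R} (hc : Tendsto c atTop (𝓝 l)) :
    Tendsto (fun n : ℕ => ∑' k : ℕ, w (k - n) * c k) atTop (𝓝 ((∑' m, w m) * l)) := by
  obtain ⟨C, hC⟩ := hc.norm.bddAbove_range
  rw [← hw.of_norm.tsum_mul_right]
  exact tendsto_tsum_shifted_mul hw (fun _ k => hC (Set.mem_range_self k))
    fun m => hc.comp (tendsto_toNat_add_natCast_atTop m)

end DominatedConvergence

section qPochhammer

variable {q x : ℂ}

lemma qPoch_zero (x q : ℂ) : qPoch x q 0 = 1 := prod_range_zero _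

lemma qPoch_succ (x q : ℂ) (n : ℕ) : qPoch x q (n + 1) = qPoch x q n * (1 - x * q ^ n) :=
  prod_range_succ _ n

lemma qPoch_add (x q : ℂ) (m n : ℕ) :
    qPoch x q (m + n) = qPoch x q m * qPoch (x * q ^ m) q n := by
  simp only [qPoch, prod_range_add, pow_add, mul_assoc]

lemma qPoch_succ' (x q : ℂ) (n : ℕ) : qPoch x q (n + 1) = (1 - x) * qPoch (x * q) q n := by
  simpa [add_comm, qPoch] using qPoch_add x q 1 n

lemma qPoch_self_succ (q : ℂ) (n : ℕ) :
    qPoch q q (n + 1) = qPoch q q n * (1 - q ^ (n + 1)) := by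
  rw [qPoch_succ, pow_succ']

lemma one_sub_pow_succ_ne_zero (hq1 : ‖q‖ < 1) (n : ℕ) : 1 - q ^ (n + 1) ≠ 0 := fun h => by
  have hlt : ‖q ^ (n + 1)‖ < 1 := by
    simpa using pow_lt_one₀ (norm_nonneg q) hq1 n.succ_ne_zero
  simp [← sub_eq_zero.1 h] at hlt

lemma qPoch_self_ne_zero (hq1 : ‖q‖ < 1) (n : ℕ) : qPoch q q n ≠ 0 :=
  prod_ne_zero_iff.2 fun j _ => by
    simpa only [pow_succ'] using one_sub_pow_succ_ne_zero hq1 j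

lemma summable_norm_neg_mul_pow (hq1 : ‖q‖ < 1) (x : ℂ) :
    Summable fun j : ℕ => ‖-(x * q ^ j)‖ := by
  simpa using (summable_geometric_of_lt_one (norm_nonneg q) hq1).mul_left ‖x‖

lemma tendsto_qPoch (hq1 : ‖q‖ < 1) (x : ℂ) :
    Tendsto (qPoch x q) atTop (𝓝 (qPochInf x q)) := by
  simpa only [qPoch, qPochInf, ← sub_eq_add_neg] using!
    (multipliable_one_add_of_summable (summable_norm_neg_mul_pow hq1 x)).hasProd.tendsto_prod_nat

lemma qPochInf_ne_zero (hq1 : ‖q‖ < 1) (hx : ∀ j : ℕ, x * q ^ j ≠ 1) : qPochInf x q ≠ 0 := by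
  simpa only [qPochInf, ← sub_eq_add_neg] using
    tprod_one_add_ne_zero_of_summable (f := fun j : ℕ => -(x * q ^ j))
      (fun j => by simpa only [← sub_eq_add_neg] using sub_ne_zero.2 (hx j).symm)
      (summable_norm_neg_mul_pow hq1 x)

lemma qPochInf_self_ne_zero (hq1 : ‖q‖ < 1) : qPochInf q q ≠ 0 :=
  qPochInf_ne_zero hq1 fun j h =>
    one_sub_pow_succ_ne_zero hq1 j (by rw [pow_succ', h, sub_self])

lemma tendsto_inv_qPoch_self (hq1 : ‖q‖ < 1) :
    Tendsto (fun n => (qPoch q q n)⁻¹) atTop (𝓝 (qPochInf q q)⁻¹) :=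
  (tendsto_qPoch hq1 q).inv₀ (qPochInf_self_ne_zero hq1)

end qPochhammer

section qBinomial

/-- The Gaussian binomial coefficient, defined by the `q`-Pascal rule so that it makes sense (and is
a polynomial in `q`) over any semiring; it vanishes for `n < k`. -/
def qChoose {R : Type*} [CommSemiring R] (q : R) : ℕ → ℕ → R
  | _, 0 => 1
  | 0, _ + 1 => 0
  | n + 1, k + 1 => qChoose q n k + q ^ (k + 1) * qChoose q n (k + 1)

section CommSemiring

variable {R : Type*} [CommSemiring R] (q : R)

lemma qChoose_zero_right (n : ℕ) : qChoose q n 0 = 1 := by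
  cases n <;> rfl

lemma qChoose_succ_succ (n k : ℕ) :
    qChoose q (n + 1) (k + 1) = qChoose q n k + q ^ (k + 1) * qChoose q n (k + 1) := rfl

lemma qChoose_eq_zero_of_lt {n k : ℕ} (h : n < k) : qChoose q n k = 0 := by
  induction n generalizing k with
  | zero => obtain ⟨k, rfl⟩ := Nat.exists_eq_succ_of_ne_zero h.ne'; rfl
  | succ n ih =>
    obtain ⟨k, rfl⟩ := Nat.exists_eq_succ_of_ne_zero (Nat.ne_zero_of_lt h)
    rw [qChoose_succ_succ, ih (by omega), ih (by omega), mul_zero, add_zero]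

theorem prod_one_add_mul_pow_eq_sum_qChoose (z : R) (n : ℕ) :
    ∏ j ∈ range n, (1 + z * q ^ j) =
      ∑ k ∈ range (n + 1), q ^ k.choose 2 * qChoose q n k * z ^ k := by
  induction n generalizing z with
  | zero => simp [qChoose_zero_right]
  | succ n ih =>
    have hprod : ∏ j ∈ range (n + 1), (1 + z * q ^ j) =
        (1 + z) * ∏ j ∈ range n, (1 + z * q * q ^ j) := by
      rw [prod_range_succ', pow_zero, mul_one, mul_comm]
      simp only [pow_succ', mul_assoc]
    have hpascal (k : ℕ) :
        q ^ (k + 1).choose 2 * qChoose q (n + 1) (k + 1) * z ^ (k + 1) =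
          q ^ (k + 1).choose 2 * qChoose q n (k + 1) * (z * q) ^ (k + 1) +
            z * (q ^ k.choose 2 * qChoose q n k * (z * q) ^ k) := by
      rw [qChoose_succ_succ, Nat.choose_succ_succ', Nat.choose_one_right]
      ring
    have hshift : ∑ k ∈ range (n + 1),
          q ^ (k + 1).choose 2 * qChoose q n (k + 1) * (z * q) ^ (k + 1) + 1 =
        ∑ k ∈ range (n + 1), q ^ k.choose 2 * qChoose q n k * (z * q) ^ k := by
      rw [sum_range_succ, qChoose_eq_zero_of_lt q n.lt_succ_self, sum_range_succ' _ n]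
      simp [qChoose_zero_right]
    rw [hprod, ih, sum_range_succ' _ (n + 1)]
    simp only [hpascal, sum_add_distrib, ← mul_sum, Nat.choose_zero_succ, pow_zero,
      qChoose_zero_right, mul_one]
    rw [add_right_comm, hshift, add_mul, one_mul]

end CommSemiring

variable {q : ℂ}

lemma qChoose_add_mul_qPoch_mul_qPoch (q : ℂ) (k m : ℕ) :
    qChoose q (k + m) k * (qPoch q q k * qPoch q q m) = qPoch q q (k + m) := by
  induction k generalizing m with
  | zero => simp [qChoose_zero_right, qPoch_zero]
  | succ k ihk =>
    induction m with
    | zero =>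
      have h := ihk 0
      simp only [add_zero, qPoch_zero] at h ⊢
      rw [qChoose_succ_succ, qChoose_eq_zero_of_lt q k.lt_succ_self, qPoch_self_succ]
      linear_combination (1 - q ^ (k + 1)) * h
    | succ m ihm =>
      have h := ihk (m + 1)
      rw [show k + 1 + m = k + (m + 1) by omega] at ihm
      rw [show k + 1 + (m + 1) = k + (m + 1) + 1 by omega, qChoose_succ_succ,
        qPoch_self_succ q (k + (m + 1)), show k + (m + 1) + 1 = (k + 1) + (m + 1) by omega, pow_add]
      simp only [qPoch_self_succ q k, qPoch_self_succ q m] at h ihm ⊢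
      linear_combination (1 - q ^ (k + 1)) * h + q ^ (k + 1) * (1 - q ^ (m + 1)) * ihm

lemma qChoose_add_eq (hq1 : ‖q‖ < 1) (k m : ℕ) :
    qChoose q (k + m) k = qPoch q q (k + m) * ((qPoch q q k)⁻¹ * (qPoch q q m)⁻¹) := by
  rw [← mul_inv, eq_mul_inv_iff_mul_eq₀
    (mul_ne_zero (qPoch_self_ne_zero hq1 k) (qPoch_self_ne_zero hq1 m))]
  exact qChoose_add_mul_qPoch_mul_qPoch q k m

lemma exists_norm_qChoose_le (hq1 : ‖q‖ < 1) : ∃ C : ℝ, ∀ n k, ‖qChoose q n k‖ ≤ C := by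
  obtain ⟨A, hA⟩ := (tendsto_qPoch hq1 q).norm.bddAbove_range
  obtain ⟨B, hB⟩ := (tendsto_inv_qPoch_self hq1).norm.bddAbove_range
  replace hA n : ‖qPoch q q n‖ ≤ A := hA (Set.mem_range_self n)
  replace hB n : ‖(qPoch q q n)⁻¹‖ ≤ B := hB (Set.mem_range_self n)
  have hA0 : 0 ≤ A := (norm_nonneg _).trans (hA 0)
  have hB0 : 0 ≤ B := (norm_nonneg _).trans (hB 0)
  refine ⟨A * (B * B), fun n k => ?_⟩
  obtain h | h := lt_or_ge n k
  · rw [qChoose_eq_zero_of_lt q h, norm_zero]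
    positivity
  · obtain ⟨m, rfl⟩ := Nat.exists_eq_add_of_le h
    rw [qChoose_add_eq hq1, norm_mul, norm_mul]
    gcongr
    exacts [hA _, hB _, hB _]

lemma tendsto_qChoose_central (hq1 : ‖q‖ < 1) (m : ℤ) :
    Tendsto (fun n : ℕ => qChoose q (n + n) (m + n).toNat) atTop (𝓝 (qPochInf q q)⁻¹) := by
  have hinv := tendsto_inv_qPoch_self hq1
  have hlim := ((tendsto_qPoch hq1 q).comp (tendsto_id.atTop_add_atTop tendsto_id)).mul
    ((hinv.comp (tendsto_toNat_add_natCast_atTop m)).mul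
      (hinv.comp (tendsto_toNat_add_natCast_atTop (-m))))
  rw [mul_inv_cancel_left₀ (qPochInf_self_ne_zero hq1)] at hlim
  refine hlim.congr' ?_
  filter_upwards [eventually_ge_atTop m.natAbs] with n hn
  have hsplit : n + n = (m + n).toNat + (-m + n).toNat := by omega
  simp only [Function.comp_apply, id_eq]
  rw [hsplit, qChoose_add_eq hq1]

end qBinomial

section Theta

/-- The `k`-th term `(-1)^k q^{k(k+1)/2} x^k` of the theta series `jtheta x q`. -/
noncomputable def jthetaTerm (x q : ℂ) (k : ℤ) : ℂ :=
  (-1 : ℂ) ^ k * q ^ (k * (k + 1) / 2) * x ^ k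

variable {q x : ℂ}

lemma jtheta_eq_tsum_jthetaTerm (x q : ℂ) : jtheta x q = ∑' k, jthetaTerm x q k := rfl

lemma jthetaD_eq_tsum_jthetaTerm (x q : ℂ) : jthetaD x q = ∑' k : ℤ, k * jthetaTerm x q k :=
  tsum_congr fun k => by rw [jthetaTerm]; ring

lemma jthetaTerm_zero (x q : ℂ) : jthetaTerm x q 0 = 1 := by simp [jthetaTerm]

lemma jthetaTerm_neg_one (x q : ℂ) : jthetaTerm x q (-1) = -x⁻¹ := by simp [jthetaTerm]

lemma jthetaTerm_natCast (x q : ℂ) (k : ℕ) :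
    jthetaTerm x q k = (-1) ^ k * q ^ (k * (k + 1) / 2) * x ^ k := by
  simp only [jthetaTerm, zpow_natCast]
  norm_cast

lemma jthetaTerm_ne_zero (hq : q ≠ 0) (hx : x ≠ 0) (k : ℤ) : jthetaTerm x q k ≠ 0 := by
  simp [jthetaTerm, zpow_ne_zero, hq, hx]

lemma add_mul_add_add_one_ediv_two (k n : ℤ) :
    (k + n) * (k + n + 1) / 2 = k * (k + 1) / 2 + n * (n + 1) / 2 + n * k := by
  have hk := Int.ediv_mul_cancel (Int.even_mul_succ_self k).two_dvd
  have hn := Int.ediv_mul_cancel (Int.even_mul_succ_self n).two_dvd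
  have hkn := Int.ediv_mul_cancel (Int.even_mul_succ_self (k + n)).two_dvd
  linarith

lemma jthetaTerm_add (hq : q ≠ 0) (hx : x ≠ 0) (k n : ℤ) :
    jthetaTerm x q (k + n) = jthetaTerm x q n * jthetaTerm (q ^ n * x) q k := by
  simp only [jthetaTerm]
  rw [add_mul_add_add_one_ediv_two, zpow_add₀ hq, zpow_add₀ hq, zpow_add₀ hx,
    zpow_add₀ (neg_ne_zero.2 one_ne_zero), mul_zpow, zpow_mul]
  ring

lemma jthetaTerm_inv_neg_one_sub (hx : x ≠ 0) (k : ℤ) :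
    jthetaTerm x⁻¹ q (-1 - k) = -x * jthetaTerm x q k := by
  have hsign : (-1 : ℂ) ^ (-1 - k) = -(-1) ^ k := by
    rw [zpow_sub₀ (neg_ne_zero.2 one_ne_zero), div_eq_mul_inv, ← inv_zpow]
    norm_num
  rw [jthetaTerm, jthetaTerm, hsign, show (-1 - k) * (-1 - k + 1) = k * (k + 1) by ring, inv_zpow',
    show -(-1 - k) = k + 1 by ring, zpow_add_one₀ hx]
  ring

lemma jtheta_inv (hx : x ≠ 0) : jtheta x⁻¹ q = -x * jtheta x q := by
  simp only [jtheta_eq_tsum_jthetaTerm]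
  rw [← tsum_mul_left, ← (Equiv.subLeft (-1 : ℤ)).tsum_eq]
  exact tsum_congr fun k => jthetaTerm_inv_neg_one_sub hx k

lemma jtheta_eq_mul_jtheta_zpow_mul (hq : q ≠ 0) (hx : x ≠ 0) (n : ℤ) :
    jtheta x q = jthetaTerm x q n * jtheta (q ^ n * x) q := by
  simp only [jtheta_eq_tsum_jthetaTerm]
  rw [← tsum_mul_left, ← (Equiv.addRight n).tsum_eq]
  exact tsum_congr fun k => jthetaTerm_add hq hx k n

lemma jthetaTerm_div_jtheta_zpow_mul (hq : q ≠ 0) (hx : x ≠ 0) (k n : ℤ) :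
    jthetaTerm (q ^ n * x) q k / jtheta (q ^ n * x) q = jthetaTerm x q (k + n) / jtheta x q := by
  rw [jtheta_eq_mul_jtheta_zpow_mul hq hx n, jthetaTerm_add hq hx,
    mul_div_mul_left _ _ (jthetaTerm_ne_zero hq hx n)]

lemma exists_jthetaTerm_eq_jacobiTheta₂_term (hq : q ≠ 0) (hq1 : ‖q‖ < 1) (hx : x ≠ 0) :
    ∃ z τ : ℂ, 0 < τ.im ∧ ∀ k, jthetaTerm x q k = jacobiTheta₂_term k z τ := by
  refine ⟨(Complex.log (-x) + Complex.log q / 2) / (2 * Real.pi * Complex.I),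
    Function.Periodic.invQParam 1 q,
    Function.Periodic.im_invQParam_pos_of_norm_lt_one one_pos hq1 hq, fun k => ?_⟩
  have hk : ((k * (k + 1) / 2 : ℤ) : ℂ) = k * (k + 1) / 2 := by
    rw [Int.cast_div (Int.even_mul_succ_self k).two_dvd two_ne_zero]
    push_cast
    rfl
  have hexp : jthetaTerm x q k =
      Complex.exp ((k * (k + 1) / 2 : ℤ) * Complex.log q + k * Complex.log (-x)) := by
    rw [Complex.exp_add, Complex.exp_int_mul, Complex.exp_int_mul, Complex.exp_log hq,
      Complex.exp_log (neg_ne_zero.2 hx), jthetaTerm, neg_eq_neg_one_mul x, mul_zpow]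
    ring
  rw [hexp, jacobiTheta₂_term, hk, Function.Periodic.invQParam]
  have hpi : (Real.pi : ℂ) ≠ 0 := Complex.ofReal_ne_zero.2 Real.pi_ne_zero
  congr 1
  push_cast
  field_simp
  ring

lemma summable_jthetaTerm (hq : q ≠ 0) (hq1 : ‖q‖ < 1) (hx : x ≠ 0) :
    Summable (jthetaTerm x q) := by
  obtain ⟨z, τ, hτ, hterm⟩ := exists_jthetaTerm_eq_jacobiTheta₂_term hq hq1 hx
  exact ((summable_jacobiTheta₂_term_iff z τ).2 hτ).congr fun k => (hterm k).symm

lemma summable_mul_jthetaTerm (hq : q ≠ 0) (hq1 : ‖q‖ < 1) (hx : x ≠ 0) :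
    Summable fun k : ℤ => k * jthetaTerm x q k := by
  obtain ⟨z, τ, hτ, hterm⟩ := exists_jthetaTerm_eq_jacobiTheta₂_term hq hq1 hx
  refine (summable_mul_left_iff Complex.two_pi_I_ne_zero).1
    (((summable_jacobiTheta₂'_term_iff z τ).2 hτ).congr fun k => ?_)
  rw [jacobiTheta₂'_term, hterm, mul_assoc]

lemma jthetaD_sub_mul_jtheta (hq : q ≠ 0) (hq1 : ‖q‖ < 1) (hx : x ≠ 0) (n : ℤ) :
    jthetaD x q - n * jtheta x q = jthetaTerm x q n * jthetaD (q ^ n * x) q := by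
  simp only [jtheta_eq_tsum_jthetaTerm, jthetaD_eq_tsum_jthetaTerm]
  rw [← tsum_mul_left, ← tsum_mul_left, ← (summable_mul_jthetaTerm hq hq1 hx).tsum_sub
    ((summable_jthetaTerm hq hq1 hx).mul_left _), ← (Equiv.addRight n).tsum_eq]
  refine tsum_congr fun k => ?_
  rw [Equiv.coe_addRight, jthetaTerm_add hq hx]
  push_cast
  ring

lemma jthetaD_div_jtheta_zpow_mul (hq : q ≠ 0) (hq1 : ‖q‖ < 1) (hx : x ≠ 0)
    (hθ : jtheta x q ≠ 0) (n : ℤ) :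
    jthetaD (q ^ n * x) q / jtheta (q ^ n * x) q = jthetaD x q / jtheta x q - n := by
  rw [← mul_div_mul_left _ _ (jthetaTerm_ne_zero hq hx n), ← jtheta_eq_mul_jtheta_zpow_mul hq hx,
    ← jthetaD_sub_mul_jtheta hq hq1 hx, sub_div, mul_div_cancel_right₀ _ hθ]

end Theta

section TripleProduct

variable {q x : ℂ}

lemma sum_jthetaTerm_mul_qChoose (x q : ℂ) (n : ℕ) :
    ∑ k ∈ range (n + 1), jthetaTerm x q k * qChoose q n k = qPoch (x * q) q n := by
  have hprod : qPoch (x * q) q n = ∏ j ∈ range n, (1 + -(x * q) * q ^ j) :=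
    prod_congr rfl fun j _ => by ring
  rw [hprod, prod_one_add_mul_pow_eq_sum_qChoose]
  refine sum_congr rfl fun k _ => ?_
  have hk : k * (k + 1) / 2 = k.choose 2 + k := by
    rw [Nat.choose_two_right, ← Finset.sum_range_id, ← Finset.sum_range_succ, Finset.sum_range_id,
      Nat.add_sub_cancel, mul_comm]
  rw [jthetaTerm_natCast, hk, neg_pow (x * q), mul_pow]
  ring

lemma jthetaTerm_neg_mul_qPoch (hq : q ≠ 0) (hx : x ≠ 0) (n : ℕ) :
    jthetaTerm x q (-n) * qPoch (q ^ (-n : ℤ) * x * q) q n = qPoch x⁻¹ q n := by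
  induction n with
  | zero => simp [jthetaTerm_zero, qPoch_zero]
  | succ n ih =>
    have hshift : q ^ (-(n + 1 : ℕ) : ℤ) * x * q = q ^ (-n : ℤ) * x := by
      rw [mul_right_comm, ← zpow_add_one₀ hq]
      push_cast
      ring_nf
    have hterm : jthetaTerm x q (-(n + 1 : ℕ)) = jthetaTerm x q (-n) * -(q ^ (-n : ℤ) * x)⁻¹ := by
      rw [← jthetaTerm_neg_one _ q, ← jthetaTerm_add hq hx]
      push_cast
      ring_nf
    have hcancel : -(q ^ (-n : ℤ) * x)⁻¹ * (1 - q ^ (-n : ℤ) * x) = 1 - x⁻¹ * q ^ n := by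
      rw [zpow_neg, zpow_natCast]
      have := pow_ne_zero n hq
      field_simp
      ring
    rw [hshift, hterm, qPoch_succ', qPoch_succ, ← ih, ← hcancel]
    ring

theorem tsum_jthetaTerm_sub_mul_qChoose (hq : q ≠ 0) (hx : x ≠ 0) (n m : ℕ) :
    ∑' k : ℕ, jthetaTerm x q (k - n) * qChoose q (n + m) k =
      qPoch x⁻¹ q n * qPoch (x * q) q m := by
  have hshift : q ^ (-n : ℤ) * x * q * q ^ n = x * q := by
    rw [zpow_neg, zpow_natCast]
    field_simp
  rw [tsum_eq_sum (s := range (n + m + 1))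
    fun k hk => by rw [qChoose_eq_zero_of_lt q (by simpa using hk), mul_zero]]
  simp only [sub_eq_add_neg, jthetaTerm_add hq hx, mul_assoc (jthetaTerm x q _)]
  rw [← mul_sum, sum_jthetaTerm_mul_qChoose, qPoch_add, hshift, ← mul_assoc,
    jthetaTerm_neg_mul_qPoch hq hx]

theorem jtheta_eq_qPochInf_mul (hq : q ≠ 0) (hq1 : ‖q‖ < 1) (hx : x ≠ 0) :
    jtheta x q = qPochInf q q * (qPochInf x⁻¹ q * qPochInf (x * q) q) := by
  obtain ⟨C, hC⟩ := exists_norm_qChoose_le hq1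
  have hsum := tendsto_tsum_shifted_mul (summable_jthetaTerm hq hq1 hx).norm
    (c := fun n k => qChoose q (n + n) k) (fun n k => hC _ k) (tendsto_qChoose_central hq1)
  simp only [tsum_jthetaTerm_sub_mul_qChoose hq hx, tsum_mul_right,
    ← jtheta_eq_tsum_jthetaTerm] at hsum
  have hprod := (tendsto_qPoch hq1 x⁻¹).mul (tendsto_qPoch hq1 (x * q))
  rw [← tendsto_nhds_unique hsum hprod, mul_comm,
    inv_mul_cancel_right₀ (qPochInf_self_ne_zero hq1)]

theorem jtheta_ne_zero (hq : q ≠ 0) (hq1 : ‖q‖ < 1) (hx : x ≠ 0) (hxq : ∀ n : ℤ, x ≠ q ^ n) :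
    jtheta x q ≠ 0 := by
  rw [jtheta_eq_qPochInf_mul hq hq1 hx]
  refine mul_ne_zero (qPochInf_self_ne_zero hq1) (mul_ne_zero ?_ ?_)
  · refine qPochInf_ne_zero hq1 fun j h => hxq j ?_
    rw [zpow_natCast, ← inv_mul_eq_one₀ hx, h]
  · refine qPochInf_ne_zero hq1 fun j h => hxq (-(j + 1 : ℕ)) ?_
    rw [zpow_neg, zpow_natCast, pow_succ']
    exact eq_inv_of_mul_eq_one_left (by rw [← mul_assoc, h])

end TripleProduct

section Limits

variable {q t : ℂ}

/-- The tail `∑_{j > k} q^j / (1 - q^j)` of the Lambert series occurring in `E1 q`. -/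
noncomputable def lambertTail (q : ℂ) (k : ℕ) : ℂ :=
  ∑' j : ℕ, q ^ (j + k + 1) / (1 - q ^ (j + k + 1))

lemma tendsto_lambertTail (q : ℂ) : Tendsto (lambertTail q) atTop (𝓝 0) :=
  tendsto_sum_nat_add fun j => q ^ (j + 1) / (1 - q ^ (j + 1))

lemma E1_half_add_sum_eq_sub_lambertTail (hq1 : ‖q‖ < 1) (k : ℕ) :
    E1 q / 2 - 1 / 2 + ∑ j ∈ range k, (1 + q ^ (j + 1)) / (1 - q ^ (j + 1)) =
      k - 2 * lambertTail q k := by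
  have hlambert : Summable fun j : ℕ => q ^ j / (1 - q ^ j) := by
    simpa only [pow_zero, one_mul] using summable_norm_pow_mul_geometric_div_one_sub (𝕜 := ℂ) 0 hq1
  replace hlambert : Summable fun j : ℕ => q ^ (j + 1) / (1 - q ^ (j + 1)) :=
    (summable_nat_add_iff (f := fun j : ℕ => q ^ j / (1 - q ^ j)) 1).2 hlambert
  have hterm (j : ℕ) : (1 + q ^ (j + 1)) / (1 - q ^ (j + 1)) =
      1 + 2 * (q ^ (j + 1) / (1 - q ^ (j + 1))) := by
    have := one_sub_pow_succ_ne_zero hq1 j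
    field_simp
    ring
  simp only [hterm, sum_add_distrib, ← mul_sum, sum_const, card_range, nsmul_eq_mul, mul_one]
  rw [E1, ← hlambert.sum_add_tsum_nat_add k, lambertTail]
  ring

lemma summand_div_jtheta_pow_mul (hq : q ≠ 0) (ht : t ≠ 0) (r k : ℕ) (d : ℂ) :
    (-1) ^ k * q ^ (k * (k + 1) / 2) / d * (q ^ r * t) ^ (-1 - k : ℤ) / jtheta (q ^ r * t) q =
      -(jthetaTerm t⁻¹ q (k - r) * d⁻¹ / jtheta t⁻¹ q) := by
  have hx : q ^ r * t ≠ 0 := mul_ne_zero (pow_ne_zero r hq) ht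
  have hinv : (q ^ r * t)⁻¹ = q ^ (-r : ℤ) * t⁻¹ := by rw [zpow_neg, zpow_natCast, mul_inv]
  have hshift := jthetaTerm_div_jtheta_zpow_mul hq (inv_ne_zero ht) k (-r)
  rw [← hinv, jthetaTerm_natCast, jtheta_inv hx, ← sub_eq_add_neg] at hshift
  have hregroup (a : ℂ) : -(a * d⁻¹ / jtheta t⁻¹ q) = -(a / jtheta t⁻¹ q) * d⁻¹ := by ring
  rw [hregroup, ← hshift, zpow_sub₀ hx, zpow_neg_one, zpow_natCast, inv_pow]
  field_simp

lemma tendsto_inv_qPoch_self_sq (hq1 : ‖q‖ < 1) :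
    Tendsto (fun k => (qPoch q q k ^ 2)⁻¹) atTop (𝓝 (qPochInf q q ^ 2)⁻¹) :=
  ((tendsto_qPoch hq1 q).pow 2).inv₀ (pow_ne_zero 2 (qPochInf_self_ne_zero hq1))

theorem tendsto_g00_div_jtheta (hq : q ≠ 0) (hq1 : ‖q‖ < 1) (ht : t ≠ 0)
    (hθ : jtheta t⁻¹ q ≠ 0) :
    Tendsto (fun r : ℕ => g00 (q ^ r * t) q / jtheta (q ^ r * t) q) atTop
      (𝓝 (-(1 / qPochInf q q ^ 2))) := by
  have hlim := ((tendsto_tsum_shifted_mul_of_tendsto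
    (summable_jthetaTerm hq hq1 (inv_ne_zero ht)).norm
    (tendsto_inv_qPoch_self_sq hq1)).div_const (jtheta t⁻¹ q)).neg
  rw [← jtheta_eq_tsum_jthetaTerm, mul_div_cancel_left₀ _ hθ,
    ← one_div (qPochInf q q ^ 2)] at hlim
  refine hlim.congr fun r => ?_
  rw [g00, ← tsum_div_const, ← tsum_div_const, ← tsum_neg]
  exact tsum_congr fun k => (summand_div_jtheta_pow_mul hq ht r k _).symm

lemma g01_div_jtheta_pow_mul (hq : q ≠ 0) (hq1 : ‖q‖ < 1) (ht : t ≠ 0)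
    (hθ : jtheta t⁻¹ q ≠ 0) (r : ℕ) :
    g01 (q ^ r * t) q / jtheta (q ^ r * t) q =
      -((∑' k : ℕ, ((k - r : ℤ) - jthetaD t⁻¹ q / jtheta t⁻¹ q - 2 * lambertTail q k) *
        (jthetaTerm t⁻¹ q (k - r) * (qPoch q q k ^ 2)⁻¹)) / jtheta t⁻¹ q) := by
  have hlog := jthetaD_div_jtheta_zpow_mul hq hq1 (inv_ne_zero ht) hθ (-r)
  rw [zpow_neg, zpow_natCast, ← mul_inv] at hlog
  rw [g01, hlog, ← tsum_div_const, ← tsum_div_const, ← tsum_neg]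
  refine tsum_congr fun k => ?_
  rw [mul_div_assoc, summand_div_jtheta_pow_mul hq ht, sub_add_eq_add_sub,
    E1_half_add_sum_eq_sub_lambertTail hq1]
  push_cast
  ring

theorem tendsto_g01_div_jtheta (hq : q ≠ 0) (hq1 : ‖q‖ < 1) (ht : t ≠ 0)
    (hθ : jtheta t⁻¹ q ≠ 0) :
    Tendsto (fun r : ℕ => g01 (q ^ r * t) q / jtheta (q ^ r * t) q) atTop (𝓝 0) := by
  have hs := inv_ne_zero ht
  set L := jthetaD t⁻¹ q / jtheta t⁻¹ q with hL
  have hw := summable_jthetaTerm hq hq1 hs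
  have hu : Summable fun m : ℤ => (m - L) * jthetaTerm t⁻¹ q m := by
    simpa only [sub_mul] using (summable_mul_jthetaTerm hq hq1 hs).sub (hw.mul_left L)
  have hu0 : ∑' m : ℤ, (m - L) * jthetaTerm t⁻¹ q m = 0 := by
    simp only [sub_mul]
    rw [(summable_mul_jthetaTerm hq hq1 hs).tsum_sub (hw.mul_left L), tsum_mul_left,
      ← jthetaD_eq_tsum_jthetaTerm, ← jtheta_eq_tsum_jthetaTerm, hL, div_mul_cancel₀ _ hθ, sub_self]
  have hp := tendsto_inv_qPoch_self_sq hq1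
  have htail := ((tendsto_lambertTail q).const_mul 2).mul hp
  obtain ⟨C, hC⟩ := hp.norm.bddAbove_range
  obtain ⟨D, hD⟩ := htail.norm.bddAbove_range
  have hlim := (((tendsto_tsum_shifted_mul_of_tendsto hu.norm hp).sub
    (tendsto_tsum_shifted_mul_of_tendsto hw.norm htail)).div_const (jtheta t⁻¹ q)).neg
  simp only [hu0, zero_mul, mul_zero, sub_zero, zero_div, neg_zero] at hlim
  refine hlim.congr fun r => ?_
  rw [g01_div_jtheta_pow_mul hq hq1 ht hθ, ← Summable.tsum_sub
    (summable_shifted_mul_of_norm_le hu.norm (fun k => hC (Set.mem_range_self k)) r)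
    (summable_shifted_mul_of_norm_le hw.norm (fun k => hD (Set.mem_range_self k)) r)]
  congr 2
  refine tsum_congr fun k => ?_
  ring

end Limits

/-- As `r → ∞`, `g^{(0,0)}(q^r t, q)/θ(q^r t;q)` tends to `−1/(q;q)_∞²` and
`g^{(0,1)}(q^r t, q)/θ(q^r t;q)` tends to `0`. -/
theorem g00_g01_theta_limits
    (q : ℂ) (hq0 : 0 < ‖q‖) (hq1 : ‖q‖ < 1)
    (t : ℂ) (ht : t ≠ 0) (htq : ∀ n : ℤ, t ≠ q ^ n) :
    Tendsto (fun r : ℕ => g00 (q ^ r * t) q / jtheta (q ^ r * t) q) atTop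
      (nhds (-(1 / qPochInf q q ^ 2))) ∧
    Tendsto (fun r : ℕ => g01 (q ^ r * t) q / jtheta (q ^ r * t) q) atTop
      (nhds 0) := by
  have hq : q ≠ 0 := norm_pos_iff.1 hq0
  have hθ : jtheta t⁻¹ q ≠ 0 := by
    rw [jtheta_inv ht]
    exact mul_ne_zero (neg_ne_zero.2 ht) (jtheta_ne_zero hq hq1 ht htq)
  exact ⟨tendsto_g00_div_jtheta hq hq1 ht hθ, tendsto_g01_div_jtheta hq hq1 ht hθ⟩
end

section
/- Let q ∈ ℂ with 0 < |q| < 1, let x ∈ ℂ∖{0} with x ∉ q^ℤ, and let h be a holomorphic function on ℂ∖{0} satisfying tq^{−1}·h(q^{−1}t) + (1 − (x + x^{−1})t)·h(t) + tq·h(qt) = 0 for every t ≠ 0. Then h vanishes identically on ℂ∖{0}. -/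
/-!
A function `h` holomorphic on `ℂ∖{0}` is determined by its Laurent coefficients `a n`, and the
equation says `a (n + 1) = (c - q ^ (n + 1) - q ^ (-(n + 1))) * a n`, where `c = x + x⁻¹`. Since
`r ^ n * ‖a n‖ ≤ sup {‖h z‖ : ‖z‖ = r}` for every `r > 0`, the sequence `a` decays
superexponentially in both directions. If `‖q‖ ≠ 1`, the factors tend to infinity, so `a` can decay
at `+∞` only if it vanishes there, and the vanishing propagates down because no factor is zero. If
`‖q‖ = 1`, the factors are bounded, so it is the decay at `-∞` that forces `a = 0`.
-/

open Complex Filter Metric Real Set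

section SuperexponentialDecay

variable {E : Type*} [NormedAddGroup E] {a : ℤ → E} {M : ℝ}

theorem eq_zero_of_norm_le_mul_norm_succ
    (ha : ∀ r : ℝ, 0 < r → BddAbove (range fun n ↦ r ^ n * ‖a n‖)) {n₀ : ℤ}
    (hM : ∀ n, n₀ ≤ n → ‖a n‖ ≤ M * ‖a (n + 1)‖) : a n₀ = 0 := by
  set r : ℝ := 2 * (|M| + 1) with hr
  have hr0 : 0 < r := by positivity
  set v : ℕ → ℝ := fun m ↦ r ^ (n₀ + m) * ‖a (n₀ + m)‖ with hv
  have hv_growth (m : ℕ) : 2 * v m ≤ v (m + 1) := by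
    have hM' : ‖a (n₀ + m)‖ ≤ (|M| + 1) * ‖a (n₀ + m + 1)‖ :=
      (hM _ (by lia)).trans (by gcongr; linarith [le_abs_self M])
    calc 2 * v m = 2 * r ^ (n₀ + m) * ‖a (n₀ + m)‖ := (mul_assoc ..).symm
      _ ≤ 2 * r ^ (n₀ + m) * ((|M| + 1) * ‖a (n₀ + m + 1)‖) := by gcongr
      _ = r ^ (n₀ + m + 1) * ‖a (n₀ + m + 1)‖ := by rw [zpow_add_one₀ hr0.ne', hr]; ring
      _ = v (m + 1) := by simp only [hv, Nat.cast_succ, add_assoc]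
  have hv_bdd : BddAbove (range v) :=
    (ha r hr0).mono (range_comp_subset_range (fun m : ℕ ↦ n₀ + m) fun n ↦ r ^ n * ‖a n‖)
  by_contra h0
  have hv0 : 0 < v 0 := by
    simpa [hv] using mul_pos (zpow_pos hr0 n₀) (norm_pos_iff.2 h0)
  exact not_bddAbove_of_tendsto_atTop (tendsto_atTop_of_geom_le hv0 one_lt_two hv_growth) hv_bdd

theorem eq_zero_of_norm_succ_le_mul_norm
    (ha : ∀ r : ℝ, 0 < r → BddAbove (range fun n ↦ r ^ n * ‖a n‖)) {n₀ : ℤ}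
    (hM : ∀ n, n < n₀ → ‖a (n + 1)‖ ≤ M * ‖a n‖) : a n₀ = 0 := by
  have ha_neg (r : ℝ) (hr : 0 < r) : BddAbove (range fun n ↦ r ^ n * ‖a (-n)‖) := by
    convert ha r⁻¹ (inv_pos.2 hr) using 1
    rw [← (Equiv.neg ℤ).surjective.range_comp]
    simp only [Function.comp_def, Equiv.neg_apply, inv_zpow', neg_neg]
  have hM_neg (n : ℤ) (hn : -n₀ ≤ n) : ‖a (-n)‖ ≤ M * ‖a (-(n + 1))‖ := by
    convert hM (-(n + 1)) (by lia) using 3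
    ring
  simpa only [neg_neg] using eq_zero_of_norm_le_mul_norm_succ ha_neg hM_neg

end SuperexponentialDecay

theorem forall_eq_zero_of_succ_eq_mul {R : Type*} [MulZeroClass R] [NoZeroDivisors R]
    {a d : ℤ → R} (hd : ∀ n, d n ≠ 0) (had : ∀ n, a (n + 1) = d n * a n) {n₀ : ℤ}
    (h₀ : a n₀ = 0) (n : ℤ) : a n = 0 := by
  induction n using Int.inductionOn' (b := n₀) with
  | zero => exact h₀
  | succ k _ ih => rw [had, ih, mul_zero]
  | pred k _ ih =>
    have hk := had (k - 1)
    rw [sub_add_cancel, ih] at hk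
    exact (mul_eq_zero.1 hk.symm).resolve_left (hd _)

section ReciprocalSums

theorem add_inv_eq_add_inv_iff {K : Type*} [Field K] {x y : K} (hx : x ≠ 0) (hy : y ≠ 0) :
    x + x⁻¹ = y + y⁻¹ ↔ x = y ∨ x = y⁻¹ := by
  have hfactor : (x - y) * (x - y⁻¹) = x * (x + x⁻¹ - (y + y⁻¹)) := by
    field_simp
    ring
  rw [← sub_eq_zero (a := x + x⁻¹), ← mul_eq_zero_iff_left hx, ← hfactor, mul_eq_zero,
    sub_eq_zero, sub_eq_zero]

theorem add_inv_ne_zpow_add_zpow_neg {K : Type*} [Field K] {x q : K} (hx : x ≠ 0) (hq : q ≠ 0)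
    (hxq : ∀ n : ℤ, x ≠ q ^ n) (n : ℤ) : x + x⁻¹ ≠ q ^ n + q ^ (-n) := by
  rw [zpow_neg, Ne, add_inv_eq_add_inv_iff hx (zpow_ne_zero n hq), ← zpow_neg]
  exact not_or_intro (hxq n) (hxq (-n))

variable {𝕜 : Type*} [NormedDivisionRing 𝕜] {q : 𝕜}

theorem tendsto_norm_zpow_add_zpow_neg_atTop (hq : q ≠ 0) (hq1 : ‖q‖ ≠ 1) :
    Tendsto (fun n : ℤ ↦ ‖q ^ n + q ^ (-n)‖) atTop atTop := by
  wlog h1 : 1 < ‖q‖ generalizing q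
  · have hq_inv : 1 < ‖q⁻¹‖ := by
      rw [norm_inv]
      exact (one_lt_inv₀ (norm_pos_iff.2 hq)).2 (lt_of_le_of_ne (not_lt.1 h1) hq1)
    simpa only [inv_zpow', neg_neg, add_comm] using this (inv_ne_zero hq) hq_inv.ne' hq_inv
  rw [← Nat.map_cast_int_atTop, tendsto_map'_iff]
  refine tendsto_atTop_mono (fun n ↦ ?_)
    (tendsto_atTop_add_const_right _ (-1) (tendsto_pow_atTop_atTop_of_one_lt h1))
  have h_neg : ‖q ^ (-(n : ℤ))‖ ≤ 1 := by
    rw [zpow_neg, zpow_natCast, norm_inv, norm_pow]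
    exact inv_le_one_of_one_le₀ (one_le_pow₀ h1.le)
  calc ‖q‖ ^ n + -1 ≤ ‖q ^ (n : ℤ)‖ - ‖q ^ (-(n : ℤ))‖ := by
        rw [zpow_natCast, norm_pow]
        linarith
    _ ≤ ‖q ^ (n : ℤ) + q ^ (-(n : ℤ))‖ := norm_sub_le_norm_add _ _

theorem norm_zpow_add_zpow_neg_le_two (hq1 : ‖q‖ = 1) (n : ℤ) : ‖q ^ n + q ^ (-n)‖ ≤ 2 := by
  refine (norm_add_le _ _).trans_eq ?_
  rw [norm_zpow, norm_zpow, hq1, one_zpow, one_zpow, one_add_one_eq_two]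

end ReciprocalSums

theorem eq_zero_of_succ_eq_sub_zpow_add_zpow_neg_mul {𝕜 : Type*} [NormedDivisionRing 𝕜]
    {q c : 𝕜} (hq : q ≠ 0) (hc : ‖q‖ ≠ 1 → ∀ n : ℤ, c ≠ q ^ n + q ^ (-n)) {a : ℤ → 𝕜}
    (ha : ∀ r : ℝ, 0 < r → BddAbove (range fun n ↦ r ^ n * ‖a n‖))
    (hrec : ∀ n, a (n + 1) = (c - (q ^ (n + 1) + q ^ (-(n + 1)))) * a n) (n : ℤ) : a n = 0 := by
  by_cases hq1 : ‖q‖ = 1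
  · refine eq_zero_of_norm_succ_le_mul_norm (M := ‖c‖ + 2) ha fun k _ ↦ ?_
    rw [hrec, norm_mul]
    gcongr
    exact (norm_sub_le _ _).trans (by gcongr; exact norm_zpow_add_zpow_neg_le_two hq1 _)
  · obtain ⟨n₀, hn₀⟩ := eventually_atTop.1
      ((tendsto_norm_zpow_add_zpow_neg_atTop hq hq1).eventually_ge_atTop (‖c‖ + 1))
    refine forall_eq_zero_of_succ_eq_mul (fun k ↦ sub_ne_zero.2 (hc hq1 _)) hrec (n₀ := n₀) ?_ n
    refine eq_zero_of_norm_le_mul_norm_succ (M := 1) ha fun k hk ↦ ?_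
    have hfactor : 1 ≤ ‖c - (q ^ (k + 1) + q ^ (-(k + 1)))‖ := by
      have := norm_sub_norm_le (q ^ (k + 1) + q ^ (-(k + 1))) c
      rw [norm_sub_rev] at this
      linarith [hn₀ (k + 1) (by lia)]
    rw [one_mul, hrec, norm_mul]
    exact le_mul_of_one_le_left (norm_nonneg _) hfactor

section CircleAverage

variable {E : Type*} [NormedAddCommGroup E]

theorem norm_circleAverage_le_of_norm_le_const [NormedSpace ℝ E] {f : ℂ → E} {c : ℂ} {R C : ℝ}
    (hf : ∀ z ∈ sphere c |R|, ‖f z‖ ≤ C) : ‖circleAverage f c R‖ ≤ C := by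
  have hint : ‖∫ θ in 0..2 * π, f (circleMap c R θ)‖ ≤ C * |2 * π - 0| :=
    intervalIntegral.norm_integral_le_of_norm_le_const fun θ _ ↦ hf _ (circleMap_mem_sphere' c R θ)
  rw [sub_zero, abs_of_pos two_pi_pos] at hint
  rw [circleAverage_def, norm_smul, norm_inv, norm_of_nonneg two_pi_pos.le,
    inv_mul_le_iff₀ two_pi_pos]
  exact hint.trans_eq (mul_comm ..)

theorem circleAverage_comp_mul_left [NormedSpace ℝ E] (f : ℂ → E) (w : ℂ) (R : ℝ) :
    circleAverage (fun z ↦ f (w * z)) 0 R = circleAverage f 0 (‖w‖ * R) := by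
  have hw (θ : ℝ) : w * circleMap 0 R θ = circleMap 0 (‖w‖ * R) (θ + w.arg) := by
    conv_lhs => rw [← norm_mul_exp_arg_mul_I w, ← circleMap_zero, circleMap_zero_mul, add_comm]
  simp only [circleAverage_eq_integral_add w.arg (f := f), circleAverage_def, hw]

theorem circleAverage_eq_of_differentiableOn_compl_singleton [NormedSpace ℂ E] {f : ℂ → E} {c : ℂ}
    (hf : DifferentiableOn ℂ f {c}ᶜ) {r R : ℝ} (hr : r ≠ 0) (hR : R ≠ 0) :
    circleAverage f c r = circleAverage f c R := by
  wlog h : 0 < r ∧ r ≤ R generalizing r R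
  · rw [← circleAverage_abs_radius (R := r), ← circleAverage_abs_radius (R := R)]
    rcases le_total |r| |R| with hrR | hRr
    · exact this (abs_ne_zero.2 hr) (abs_ne_zero.2 hR) ⟨abs_pos.2 hr, hrR⟩
    · exact (this (abs_ne_zero.2 hR) (abs_ne_zero.2 hr) ⟨abs_pos.2 hR, hRr⟩).symm
  obtain ⟨hr0, hrR⟩ := h
  rw [circleAverage_eq_circleIntegral hr, circleAverage_eq_circleIntegral hR]
  congr 1
  refine (circleIntegral_sub_center_inv_smul_eq_of_differentiable_on_annulus_off_countable
    hr0 hrR countable_empty (hf.continuousOn.mono ?_) fun z hz ↦ ?_).symm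
  · rintro z ⟨-, hz⟩ rfl
    exact hz (mem_ball_self hr0)
  · refine hf.differentiableAt (isOpen_compl_singleton.mem_nhds ?_)
    rintro rfl
    exact hz.1.2 (mem_closedBall_self hr0.le)

end CircleAverage

theorem eq_zero_of_fourierCoeff_eq_zero {T : ℝ} [Fact (0 < T)] {F : C(AddCircle T, ℂ)}
    (hF : ∀ n, fourierCoeff F n = 0) : F = 0 := by
  have hsummable : Summable (fourierCoeff F) := by
    simpa only [funext hF] using summable_zero
  have hsum := hasSum_fourier_series_of_summable hsummable
  simp only [hF, zero_smul] at hsum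
  exact hsum.unique hasSum_zero

/-- The coefficient of `z ^ n` in the Laurent expansion at `0` of a function `f` holomorphic on
`ℂ∖{0}`, as the average of `z ^ (-n) • f z` over the unit circle. -/
noncomputable def laurentCoeff {E : Type*} [NormedAddCommGroup E] [NormedSpace ℂ E]
    (f : ℂ → E) (n : ℤ) : E :=
  circleAverage (fun z ↦ z ^ (-n) • f z) 0 1

namespace laurentCoeff

variable {E : Type*} [NormedAddCommGroup E] [NormedSpace ℂ E] {f g : ℂ → E}

theorem eq_circleAverage (hf : DifferentiableOn ℂ f {0}ᶜ) (n : ℤ) {R : ℝ} (hR : R ≠ 0) :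
    laurentCoeff f n = circleAverage (fun z ↦ z ^ (-n) • f z) 0 R := by
  refine circleAverage_eq_of_differentiableOn_compl_singleton (DifferentiableOn.smul ?_ hf)
    one_ne_zero hR
  exact fun z hz ↦ (differentiableAt_zpow.2 (.inl hz)).differentiableWithinAt

theorem bddAbove_range_zpow_mul_norm (hf : DifferentiableOn ℂ f {0}ᶜ) {r : ℝ} (hr : 0 < r) :
    BddAbove (range fun n ↦ r ^ n * ‖laurentCoeff f n‖) := by
  have hsphere : sphere (0 : ℂ) r ⊆ {0}ᶜ := fun z hz ↦ ne_of_mem_sphere hz hr.ne'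
  obtain ⟨C, hC⟩ :=
    (isCompact_sphere (0 : ℂ) r).exists_bound_of_continuousOn (hf.continuousOn.mono hsphere)
  rw [← abs_of_pos hr] at hC
  refine ⟨C, forall_mem_range.2 fun n ↦ ?_⟩
  have hcoeff : ‖laurentCoeff f n‖ ≤ r ^ (-n) * C := by
    rw [eq_circleAverage hf n hr.ne']
    refine norm_circleAverage_le_of_norm_le_const fun z hz ↦ ?_
    rw [norm_smul, norm_zpow, mem_sphere_zero_iff_norm.1 hz, abs_of_pos hr]
    gcongr
    exact hC z hz
  rwa [zpow_neg, le_inv_mul_iff₀ (zpow_pos hr n)] at hcoeff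

theorem comp_mul_left (hf : DifferentiableOn ℂ f {0}ᶜ) {w : ℂ} (hw : w ≠ 0) (n : ℤ) :
    laurentCoeff (fun z ↦ f (w * z)) n = w ^ n • laurentCoeff f n := by
  have hsmul (z : ℂ) : z ^ (-n) • f (w * z) = w ^ n • ((w * z) ^ (-n) • f (w * z)) := by
    rw [smul_smul, mul_zpow, ← mul_assoc, ← zpow_add₀ hw, add_neg_cancel, zpow_zero, one_mul]
  simp only [laurentCoeff, hsmul]
  rw [circleAverage_fun_smul, circleAverage_comp_mul_left fun z ↦ z ^ (-n) • f z, mul_one,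
    ← eq_circleAverage hf n (norm_ne_zero_iff.2 hw), laurentCoeff]

theorem const_smul (c : ℂ) (f : ℂ → E) (n : ℤ) :
    laurentCoeff (fun z ↦ c • f z) n = c • laurentCoeff f n := by
  simp only [laurentCoeff, smul_comm _ c]
  exact circleAverage_fun_smul

theorem sub (hf : ContinuousOn f (sphere 0 1)) (hg : ContinuousOn g (sphere 0 1)) (n : ℤ) :
    laurentCoeff (fun z ↦ f z - g z) n = laurentCoeff f n - laurentCoeff g n := by
  have hzpow : ContinuousOn (fun z : ℂ ↦ z ^ (-n)) (sphere 0 1) := fun z hz ↦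
    (continuousAt_zpow₀ z (-n) (.inl (ne_of_mem_sphere hz one_ne_zero))).continuousWithinAt
  simp only [laurentCoeff, smul_sub]
  exact circleAverage_fun_sub ((hzpow.smul hf).circleIntegrable zero_le_one)
    ((hzpow.smul hg).circleIntegrable zero_le_one)

theorem succ_of_eqOn_smul (hfg : EqOn f (fun z ↦ z • g z) (sphere 0 1)) (n : ℤ) :
    laurentCoeff f (n + 1) = laurentCoeff g n := by
  refine circleAverage_congr_sphere fun z hz ↦ ?_
  rw [abs_one] at hz
  have hz0 : z ≠ 0 := ne_of_mem_sphere hz one_ne_zero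
  simp only [hfg hz, smul_smul]
  rw [← zpow_add_one₀ hz0, neg_add, neg_add_cancel_right]

local instance : Fact (0 < 2 * π) := ⟨two_pi_pos⟩

theorem fourierCoeff_comp_toCircle (f : ℂ → E) (n : ℤ) :
    fourierCoeff (fun y : AddCircle (2 * π) ↦ f y.toCircle) n = laurentCoeff f n := by
  have htoCircle (θ : ℝ) : (AddCircle.toCircle (θ : AddCircle (2 * π)) : ℂ) = circleMap 0 1 θ := by
    rw [AddCircle.toCircle_apply_mk, div_self two_pi_pos.ne', one_mul, Circle.coe_exp,
      circleMap_zero, ofReal_one, one_mul]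
  simp only [fourierCoeff_eq_intervalIntegral _ n 0, zero_add, fourier_apply,
    AddCircle.toCircle_zsmul, Circle.coe_zpow, htoCircle, one_div, laurentCoeff, circleAverage_def]

theorem eq_zero_of_forall_eq_zero {f : ℂ → ℂ} (hf : DifferentiableOn ℂ f {0}ᶜ)
    (hcoeff : ∀ n, laurentCoeff f n = 0) {t : ℂ} (ht : t ≠ 0) : f t = 0 := by
  have hcont : Continuous fun y : AddCircle (2 * π) ↦ f (t * y.toCircle) :=
    hf.continuousOn.comp_continuous (by fun_prop) fun y ↦ mul_ne_zero ht (Circle.coe_ne_zero _)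
  have hzero : (⟨_, hcont⟩ : C(AddCircle (2 * π), ℂ)) = 0 :=
    eq_zero_of_fourierCoeff_eq_zero fun n ↦ by
      rw [ContinuousMap.coe_mk, fourierCoeff_comp_toCircle fun z ↦ f (t * z),
        comp_mul_left hf ht, hcoeff, smul_zero]
  simpa using DFunLike.congr_fun hzero 0

end laurentCoeff

theorem laurentCoeff_succ_of_qDifference_eq_zero {q c : ℂ} (hq : q ≠ 0) {h : ℂ → ℂ}
    (hhol : DifferentiableOn ℂ h {0}ᶜ)
    (heq : ∀ t : ℂ, t ≠ 0 →
      t * q⁻¹ * h (q⁻¹ * t) + (1 - c * t) * h t + t * q * h (q * t) = 0) (n : ℤ) :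
    laurentCoeff h (n + 1) = (c - (q ^ (n + 1) + q ^ (-(n + 1)))) * laurentCoeff h n := by
  have hq_inv : q⁻¹ ≠ 0 := inv_ne_zero hq
  have hne_zero {z : ℂ} (hz : z ∈ sphere 0 1) : z ≠ 0 := ne_of_mem_sphere hz one_ne_zero
  have hscale : ContinuousOn (fun z ↦ c • h z) (sphere 0 1) :=
    (hhol.continuousOn.mono fun _ ↦ hne_zero).const_smul c
  have hdilate {w : ℂ} (hw : w ≠ 0) : ContinuousOn (fun z ↦ w • h (w * z)) (sphere 0 1) :=
    (hhol.continuousOn.comp (by fun_prop) fun _ hz ↦ mul_ne_zero hw (hne_zero hz)).const_smul w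
  have hsolve : EqOn h (fun z ↦ z • (c • h z - q⁻¹ • h (q⁻¹ * z) - q • h (q * z)))
      (sphere 0 1) := fun z hz ↦ by
    simp only [smul_eq_mul]
    linear_combination heq z (hne_zero hz)
  calc laurentCoeff h (n + 1)
    _ = laurentCoeff (fun z ↦ c • h z - q⁻¹ • h (q⁻¹ * z) - q • h (q * z)) n :=
      laurentCoeff.succ_of_eqOn_smul hsolve n
    _ = c • laurentCoeff h n - q⁻¹ • q⁻¹ ^ n • laurentCoeff h n
          - q • q ^ n • laurentCoeff h n := by
      rw [laurentCoeff.sub (hscale.fun_sub (hdilate hq_inv)) (hdilate hq),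
        laurentCoeff.sub hscale (hdilate hq_inv)]
      simp only [laurentCoeff.const_smul, laurentCoeff.comp_mul_left hhol hq_inv,
        laurentCoeff.comp_mul_left hhol hq]
    _ = (c - (q ^ (n + 1) + q ^ (-(n + 1)))) * laurentCoeff h n := by
      rw [zpow_neg, ← inv_zpow, zpow_add_one₀ hq, zpow_add_one₀ hq_inv]
      simp only [smul_eq_mul]
      ring

theorem holomorphic_solution_41x_vanishes_general {q : ℂ} (hq : q ≠ 0) {c : ℂ}
    (hc : ‖q‖ ≠ 1 → ∀ n : ℤ, c ≠ q ^ n + q ^ (-n)) {h : ℂ → ℂ}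
    (hhol : DifferentiableOn ℂ h {0}ᶜ)
    (heq : ∀ t : ℂ, t ≠ 0 →
      t * q⁻¹ * h (q⁻¹ * t) + (1 - c * t) * h t + t * q * h (q * t) = 0) :
    ∀ t : ℂ, t ≠ 0 → h t = 0 := by
  have hcoeff : ∀ n, laurentCoeff h n = 0 :=
    eq_zero_of_succ_eq_sub_zpow_add_zpow_neg_mul hq hc
      (fun _ hr ↦ laurentCoeff.bddAbove_range_zpow_mul_norm hhol hr)
      (laurentCoeff_succ_of_qDifference_eq_zero hq hhol heq)
  exact fun _ ht ↦ laurentCoeff.eq_zero_of_forall_eq_zero hhol hcoeff ht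

/-- A function holomorphic on `ℂ∖{0}` satisfying the homogeneous x-deformed 4₁
equation `tq^{−1}·h(q^{−1}t) + (1 − (x + x^{−1})t)·h(t) + tq·h(qt) = 0` for all
`t ≠ 0` (with `0 < |q| < 1` and `x ∉ q^ℤ`) vanishes identically on `ℂ∖{0}`. -/
theorem holomorphic_solution_41x_vanishes
    (q : ℂ) (hq0 : 0 < ‖q‖) (hq1 : ‖q‖ < 1)
    (x : ℂ) (hx : x ≠ 0) (hxq : ∀ n : ℤ, x ≠ q ^ n)
    (h : ℂ → ℂ) (hhol : ∀ t : ℂ, t ≠ 0 → DifferentiableAt ℂ h t)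
    (heq : ∀ t : ℂ, t ≠ 0 →
      t * q⁻¹ * h (q⁻¹ * t) + (1 - (x + x⁻¹) * t) * h t + t * q * h (q * t) = 0) :
    ∀ t : ℂ, t ≠ 0 → h t = 0 := by
  have hq : q ≠ 0 := norm_pos_iff.1 hq0
  exact holomorphic_solution_41x_vanishes_general hq
    (fun _ ↦ add_inv_ne_zpow_add_zpow_neg hx hq hxq)
    (fun t ht ↦ (hhol t ht).differentiableWithinAt) heq
end

section
/- Let q, t ∈ ℂ∖{0}. Define the 2×2 complex matrices A(t,q) = [[0, 1], [−q^{−2}, 2q^{−1} − q^{−2}t^{−1}]] (the companion matrix of the q-difference equation tq f(qt) + (1−2t) f(t) + tq^{−1} f(q^{−1}t) = 0 of the 4₁ knot), A^∧(t,q) = A(qt, q^{−1})^{−1}, A^∨(t,q) = (A(t,q)^{−1})^T, P^∧(t,q) = [[1, 0], [2q^{−1} − q^{−1}t^{−1}, −q^{−2}]], and P^∨(t,q) = [[0, −q^{−1}t^{−2}], [q^{−1}t^{−2}, 0]]. Then A(t,q) = P^∧(qt,q) · A^∧(t,q) · P^∧(t,q)^{−1} and A(t,q) = P^∨(qt,q)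 · A^∨(t,q) · P^∨(t,q)^{−1}; in particular the q-holonomic module of the 4₁ knot is gauge equivalent to both of its duals. -/
open Matrix

/-- The companion matrix of the q-difference equation
`tq f(qt) + (1−2t) f(t) + tq^{−1} f(q^{−1}t) = 0` of the 4₁ knot. -/
noncomputable def A41 (t q : ℂ) : Matrix (Fin 2) (Fin 2) ℂ :=
  !![0, 1; -(q ^ 2)⁻¹, 2 * q⁻¹ - (q ^ 2)⁻¹ * t⁻¹]

/-- The `∧`-dual companion matrix `A^∧(t,q) = A(qt, q^{−1})^{−1}`. -/
noncomputable def A41w (t q : ℂ) : Matrix (Fin 2) (Fin 2) ℂ := (A41 (q * t) q⁻¹)⁻¹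

/-- The `∨`-dual companion matrix `A^∨(t,q) = (A(t,q)^{−1})^T`. -/
noncomputable def A41v (t q : ℂ) : Matrix (Fin 2) (Fin 2) ℂ := ((A41 t q)⁻¹)ᵀ

/-- The gauge transformation `P^∧`. -/
noncomputable def P41w (t q : ℂ) : Matrix (Fin 2) (Fin 2) ℂ :=
  !![1, 0; 2 * q⁻¹ - q⁻¹ * t⁻¹, -(q ^ 2)⁻¹]

/-- The gauge transformation `P^∨`. -/
noncomputable def P41v (t q : ℂ) : Matrix (Fin 2) (Fin 2) ℂ :=
  !![0, -(q * t ^ 2)⁻¹; (q * t ^ 2)⁻¹, 0]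

/-!
For a solution `f`, the vector `(f(t), f(qt))` is advanced by `A(t,q)`. The equation is unchanged
by `q ↦ q⁻¹`, so `(f(t), f(q⁻¹t))` is advanced by `A(qt,q⁻¹)⁻¹ = A^∧(t,q)`, and `P^∧(t,q)` is the
change of basis from `(f(t), f(q⁻¹t))` to `(f(t), f(qt))`.

The `∨`-duality comes from the alternating form on a plane, which `A(t,q)` preserves up to the
factor `det A(t,q) = q⁻²`; the entry `q⁻¹t⁻²` of `P^∨` is chosen to solve `c(qt) = q⁻² c(t)`.
-/

theorem mul_skew_fin_two_mul_transpose {R : Type*} [CommRing R]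
    (M : Matrix (Fin 2) (Fin 2) R) (c : R) :
    M * !![0, -c; c, 0] * Mᵀ = !![0, -(M.det * c); M.det * c, 0] := by
  rw [eta_fin_two Mᵀ, det_fin_two M]
  nth_rw 1 [eta_fin_two M]
  simp only [mul_fin_two, transpose_apply]
  ring_nf

theorem companion_fin_two_mul_swap {R : Type*} [Semiring R] (a b : R) :
    !![0, 1; a, b] * !![0, 1; 1, 0] = !![1, 0; b, a] := by
  simp

theorem mul_companion_fin_two_eq_swap {R : Type*} [Semiring R] {a b a' b' : R}
    (ha : a * a' = 1) (hb : b + a * b' = 0) :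
    !![1, 0; b, a] * !![0, 1; a', b'] = !![0, 1; 1, 0] := by
  simp [ha, hb]

theorem det_A41 (t q : ℂ) : (A41 t q).det = (q ^ 2)⁻¹ := by
  simp [A41]

theorem A41_mul_swap (t q : ℂ) : A41 t q * !![0, 1; 1, 0] = P41w (q * t) q := by
  have hentry : (q ^ 2)⁻¹ * t⁻¹ = q⁻¹ * (q * t)⁻¹ := by ring
  rw [A41, companion_fin_two_mul_swap, P41w, hentry]

theorem P41w_mul_A41_inv_param (t : ℂ) {q : ℂ} (hq : q ≠ 0) :
    P41w t q * A41 (q * t) q⁻¹ = !![0, 1; 1, 0] := by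
  have hlast : -(q ^ 2)⁻¹ * -(q⁻¹ ^ 2)⁻¹ = 1 := by field_simp
  have hmiddle : 2 * q⁻¹ - q⁻¹ * t⁻¹
      + -(q ^ 2)⁻¹ * (2 * q⁻¹⁻¹ - (q⁻¹ ^ 2)⁻¹ * (q * t)⁻¹) = 0 := by
    rw [mul_inv q t]
    field_simp
    ring
  exact mul_companion_fin_two_eq_swap hlast hmiddle

theorem A41_mul_P41v_mul_transpose (t q : ℂ) :
    A41 t q * P41v t q * (A41 t q)ᵀ = P41v (q * t) q := by
  have hscale : (q ^ 2)⁻¹ * (q * t ^ 2)⁻¹ = (q * (q * t) ^ 2)⁻¹ := by ring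
  rw [P41v, mul_skew_fin_two_mul_transpose, det_A41, hscale, P41v]

theorem isUnit_det_A41 (t : ℂ) {q : ℂ} (hq : q ≠ 0) : IsUnit (A41 t q).det := by
  simp [det_A41, hq]

theorem isUnit_det_P41v {t q : ℂ} (hq : q ≠ 0) (ht : t ≠ 0) : IsUnit (P41v t q).det := by
  simp [P41v, hq, ht]

/-- The q-holonomic module of the 4₁ knot is gauge equivalent to both of its duals:
`A(t,q) = P^∧(qt,q) A^∧(t,q) P^∧(t,q)^{−1}` and
`A(t,q) = P^∨(qt,q) A^∨(t,q) P^∨(t,q)^{−1}`. -/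
theorem A41_self_dual (q t : ℂ) (hq : q ≠ 0) (ht : t ≠ 0) :
    A41 t q = P41w (q * t) q * A41w t q * (P41w t q)⁻¹ ∧
    A41 t q = P41v (q * t) q * A41v t q * (P41v t q)⁻¹ := by
  constructor
  · symm
    calc P41w (q * t) q * A41w t q * (P41w t q)⁻¹
        = A41 t q * !![0, 1; 1, 0] * (P41w t q * A41 (q * t) q⁻¹)⁻¹ := by
          rw [A41_mul_swap, A41w, Matrix.mul_inv_rev, Matrix.mul_assoc]
      _ = A41 t q * !![0, 1; 1, 0] * !![0, 1; 1, 0]⁻¹ := by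
          rw [P41w_mul_A41_inv_param t hq]
      _ = A41 t q := mul_nonsing_inv_cancel_right _ _ (by simp)
  · symm
    calc P41v (q * t) q * A41v t q * (P41v t q)⁻¹
        = A41 t q * P41v t q * (A41 t q)ᵀ * ((A41 t q)ᵀ)⁻¹ * (P41v t q)⁻¹ := by
          rw [A41_mul_P41v_mul_transpose, A41v, transpose_nonsing_inv]
      _ = A41 t q * P41v t q * (P41v t q)⁻¹ := by
          rw [mul_nonsing_inv_cancel_right _ _ (isUnit_det_transpose _ (isUnit_det_A41 t hq))]
      _ = A41 t q := mul_nonsing_inv_cancel_right _ _ (isUnit_det_P41v hq ht)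
end
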